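/- The polynomial sieving system of f satisfies hypothesis (g) with c₁ = 2 and c₂ = (log 2)/d²: there is a constant C_f such that for every u ≥ 10, every choice of nonzero integers m_q with m_q mod q ∈ I_q − I_q (one for each prime q with |I_q| ≥ 1), every integer w with |w| ≤ u, and every k ≥ 1, one has #{q prime : |I_q| ≥ 1, 0 < |m_q| ≤ u, m_q + w ≠ 0, N(m_q + w) ≥ k} ≤ C_f · 2^{−k/d²} · u · (log u)². -/

import Mathlib

open scoped BigOperators Pointwise Classical

noncomputable section

/-- The set of primes `p` such that `v mod p ∈ I_p - I_p`; `N(v)` is its cardinality. -/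
def Nset (I : ∀ p : ℕ, Finset (ZMod p)) (v : ℤ) : Set ℕ :=
  {p : ℕ | p.Prime ∧ (v : ZMod p) ∈ (I p - I p)}

/-- The set of primes `q` counted in Hypothesis (g). -/
def gSet (I : ∀ p : ℕ, Finset (ZMod p)) (mq : ℕ → ℤ) (u : ℝ) (w : ℤ) (k : ℕ) : Set ℕ :=
  {q : ℕ | q.Prime ∧ (I q).Nonempty ∧ 0 < |mq q| ∧ ((|mq q| : ℤ) : ℝ) ≤ u ∧
    mq q + w ≠ 0 ∧ k ≤ (Nset I (mq q + w)).ncard}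

/-!
Let `g` be an integer multiple of `f` with integer coefficients. The polynomial
`R(v) = Res(g(X), g(X + v))` has no nonzero integer root, because `f` is irreducible, and every
prime counted by `N(v)` divides `R(v)`. So the primes counted by `N(v)` have product at most `x ^ A`
for `|v| ≤ x`; and since `q ∣ R(m_q)`, each value `m` is taken by `m_q` for only `O(log u)` primes
`q`. By Markov's inequality it remains to prove that `∑ y ^ N(v)` over `0 < |v| ≤ x` is
`O(x log x)` for `y = 2 ^ (1 / d²)`; Bernoulli's inequality gives `d² (y - 1) ≤ 1`.

The product of the primes counted by `N(v)` may exceed `x`, so keep only the longest initial segment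
`T v` with product at most `x`. If the next prime is about `x ^ (1 / s)`, then at most `A (s + 1)`
primes are lost and `∏ q ∈ T v, q` is at least `x ^ (1 - 1 / s)`. Rankin's trick absorbs the loss
`y ^ (A (s + 1))`: it is at most a constant times `2 ^ (-s) ∏ q ∈ T v, q ^ α` with
`α = c s / log x` and `e ^ c = 2 y ^ A`, while `q ^ α ≤ e ^ c` on `T v`. Expanding
`∏ q ∈ T v, (1 + (y q ^ α - 1))` over the subsets of `T v`, and counting by the Chinese remainder
theorem for moduli at most `x`, leads to `x ∑ 1 / n` over squarefree `n ≤ x`, up to the bounded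
factor `exp (O(∑ (q ^ α - 1) / q))`.
-/

section

open Finset Polynomial

/-! ### Integers in prescribed residue classes -/

theorem card_le_of_forall_dvd_sub {F : Finset ℤ} {n : ℕ} {x : ℝ} (hn : 0 < n)
    (hx : 0 ≤ x) (hF : ∀ v ∈ F, |(v : ℝ)| ≤ x) (hdvd : ∀ v ∈ F, ∀ w ∈ F, (n : ℤ) ∣ v - w) :
    (#F : ℝ) ≤ 2 * x / n + 1 := by
  rcases F.eq_empty_or_nonempty with rfl | hne
  · simp only [card_empty, Nat.cast_zero]
    positivity
  set a := F.min' hne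
  have ha : a ∈ F := F.min'_mem hne
  have hn' : (0 : ℝ) < n := by exact_mod_cast hn
  have hmaps : ∀ v ∈ F, (v - a) / n ∈ Icc (0 : ℤ) ⌊2 * x / n⌋ := fun v hv => by
    obtain ⟨j, hj⟩ := hdvd v hv a ha
    have hjv : (n : ℝ) * j = v - a := by exact_mod_cast hj.symm
    rw [hj, Int.mul_ediv_cancel_left _ (by exact_mod_cast hn.ne'), mem_Icc, Int.le_floor,
      le_div_iff₀ hn']
    refine ⟨?_, ?_⟩
    · have hav : 0 ≤ (n : ℤ) * j := hj ▸ sub_nonneg.2 (F.min'_le v hv)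
      exact nonneg_of_mul_nonneg_right hav (by exact_mod_cast hn)
    · linarith [(abs_le.1 (hF v hv)).2, (abs_le.1 (hF a ha)).1]
  have hinj : Set.InjOn (fun v : ℤ => (v - a) / n) F := fun v hv w hw hvw => by
    have := (Int.ediv_left_inj (hdvd v hv a ha) (hdvd w hw a ha)).1 hvw
    linarith
  have hcard : #F ≤ (⌊2 * x / n⌋ + 1).toNat := by
    simpa only [Int.card_Icc, sub_zero] using card_le_card_of_injOn _ hmaps hinj
  have hfloor : 0 ≤ ⌊2 * x / n⌋ := Int.floor_nonneg.2 (by positivity)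
  calc (#F : ℝ) ≤ ((⌊2 * x / n⌋ + 1).toNat : ℤ) := by exact_mod_cast hcard
    _ = ⌊2 * x / n⌋ + 1 := by
      rw [Int.toNat_of_nonneg (by linarith)]
      push_cast
      rfl
    _ ≤ 2 * x / n + 1 := by gcongr; exact Int.floor_le _

theorem card_filter_forall_intCast_mem_le {D : ∀ p : ℕ, Finset (ZMod p)} {e : Finset ℕ}
    (hpos : ∀ p ∈ e, 0 < p) (hcop : (e : Set ℕ).Pairwise Nat.Coprime) {x : ℝ} (hx : 0 ≤ x)
    {V : Finset ℤ} (hV : ∀ v ∈ V, |(v : ℝ)| ≤ x) :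
    (#{v ∈ V | ∀ p ∈ e, (v : ZMod p) ∈ D p} : ℝ) ≤
      (2 * x / ∏ p ∈ e, (p : ℝ) + 1) * ∏ p ∈ e, (#(D p) : ℝ) := by
  set F := {v ∈ V | ∀ p ∈ e, (v : ZMod p) ∈ D p}
  let residues : ℤ → ∀ p ∈ e, ZMod p := fun v p _ => v
  have hmaps : ∀ v ∈ F, residues v ∈ e.pi D := fun v hv => mem_pi.2 (mem_filter.1 hv).2
  have hfiber (r) : (#{v ∈ F | residues v = r} : ℝ) ≤ 2 * x / ∏ p ∈ e, (p : ℝ) + 1 := by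
    rw [← Nat.cast_prod]
    refine card_le_of_forall_dvd_sub (prod_pos hpos) hx
      (fun v hv => hV v (mem_filter.1 (mem_filter.1 hv).1).1) fun v hv w hw => ?_
    rw [Nat.cast_prod]
    refine prod_dvd_of_coprime (fun p hp q hq hpq => (hcop hp hq hpq).isCoprime) fun p hp => ?_
    have hvw : residues v p hp = residues w p hp := by
      rw [(mem_filter.1 hv).2, (mem_filter.1 hw).2]
    exact (ZMod.intCast_eq_intCast_iff_dvd_sub w v p).1 hvw.symm
  calc (#F : ℝ) = ∑ r ∈ e.pi D, (#{v ∈ F | residues v = r} : ℝ) := by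
        exact_mod_cast card_eq_sum_card_fiberwise hmaps
    _ ≤ ∑ _r ∈ e.pi D, (2 * x / ∏ p ∈ e, (p : ℝ) + 1) := sum_le_sum fun r _ => hfiber r
    _ = (2 * x / ∏ p ∈ e, (p : ℝ) + 1) * ∏ p ∈ e, (#(D p) : ℝ) := by
      rw [sum_const, card_pi, nsmul_eq_mul, Nat.cast_prod, mul_comm]

theorem card_filter_forall_intCast_mem_le_prod_div {D : ∀ p : ℕ, Finset (ZMod p)} {e : Finset ℕ}
    (hpos : ∀ p ∈ e, 0 < p) (hcop : (e : Set ℕ).Pairwise Nat.Coprime) {M : ℕ}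
    (hD : ∀ p ∈ e, #(D p) ≤ M) {x : ℝ} (hx : ((∏ p ∈ e, p : ℕ) : ℝ) ≤ x)
    {V : Finset ℤ} (hV : ∀ v ∈ V, |(v : ℝ)| ≤ x) :
    (#{v ∈ V | ∀ p ∈ e, (v : ZMod p) ∈ D p} : ℝ) ≤ 3 * x * ∏ p ∈ e, (M / p : ℝ) := by
  have hQ : 0 < ∏ p ∈ e, (p : ℝ) := prod_pos fun p hp => by exact_mod_cast hpos p hp
  rw [Nat.cast_prod] at hx
  have hx0 : 0 ≤ x := hQ.le.trans hx
  have hone : 1 ≤ x / ∏ p ∈ e, (p : ℝ) := (one_le_div hQ).2 hx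
  calc (#{v ∈ V | ∀ p ∈ e, (v : ZMod p) ∈ D p} : ℝ)
      ≤ (2 * x / ∏ p ∈ e, (p : ℝ) + 1) * ∏ p ∈ e, (#(D p) : ℝ) :=
        card_filter_forall_intCast_mem_le hpos hcop hx0 hV
    _ ≤ 3 * (x / ∏ p ∈ e, (p : ℝ)) * ∏ _p ∈ e, (M : ℝ) := by
      gcongr with p hp
      · rw [mul_div_assoc]
        linarith
      · exact hD p hp
    _ = 3 * x * ∏ p ∈ e, (M / p : ℝ) := by
      rw [prod_div_distrib]
      ring

/-! ### Sums over primes and over squarefree integers -/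

theorem sum_vonMangoldt_div_le (N : ℕ) :
    ∑ n ∈ Ioc 0 N, ArithmeticFunction.vonMangoldt n / n ≤ 2 * Real.log N := by
  rcases N.eq_zero_or_pos with rfl | hN
  · simp
  have hN' : (0 : ℝ) < N := by exact_mod_cast hN
  have hlog : ∑ n ∈ Ioc 0 N, ArithmeticFunction.vonMangoldt n * (N / n : ℕ) =
      ∑ n ∈ Ioc 0 N, Real.log n := by
    rw [← ArithmeticFunction.sum_Ioc_mul_zeta_eq_sum, ArithmeticFunction.vonMangoldt_mul_zeta]
    rfl
  have hhalf : ∀ n ∈ Ioc 0 N, (N : ℝ) / n ≤ 2 * (N / n : ℕ) := fun n hn => by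
    obtain ⟨hn0, hnN⟩ := mem_Ioc.1 hn
    have hn0' : (0 : ℝ) < n := by exact_mod_cast hn0
    have hlt : N < n * (N / n + 1) := Nat.lt_mul_div_succ N hn0
    have hle : n ≤ n * (N / n) := Nat.le_mul_of_pos_right n (Nat.div_pos hnN hn0)
    rw [div_le_iff₀ hn0']
    exact_mod_cast (by linarith : N ≤ 2 * (N / n) * n)
  have hsum : N * ∑ n ∈ Ioc 0 N, ArithmeticFunction.vonMangoldt n / n ≤
      N * (2 * Real.log N) :=
    calc N * ∑ n ∈ Ioc 0 N, ArithmeticFunction.vonMangoldt n / n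
        = ∑ n ∈ Ioc 0 N, ArithmeticFunction.vonMangoldt n * (N / n : ℝ) := by
          rw [mul_sum]
          exact sum_congr rfl fun n _ => by ring
      _ ≤ ∑ n ∈ Ioc 0 N, ArithmeticFunction.vonMangoldt n * (2 * (N / n : ℕ)) :=
          sum_le_sum fun n hn =>
            mul_le_mul_of_nonneg_left (hhalf n hn) ArithmeticFunction.vonMangoldt_nonneg
      _ = 2 * ∑ n ∈ Ioc 0 N, Real.log n := by
          rw [← hlog, mul_sum]
          exact sum_congr rfl fun n _ => by ring
      _ ≤ 2 * ∑ _n ∈ Ioc 0 N, Real.log N := by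
          gcongr with n hn
          · exact_mod_cast (mem_Ioc.1 hn).1
          · exact_mod_cast (mem_Ioc.1 hn).2
      _ = N * (2 * Real.log N) := by
          rw [sum_const, Nat.card_Ioc, nsmul_eq_mul, Nat.sub_zero]
          ring
  exact le_of_mul_le_mul_left hsum hN'

theorem sum_log_div_le {P : Finset ℕ} {N : ℕ} (hP : ∀ q ∈ P, q.Prime) (hN : ∀ q ∈ P, q ≤ N) :
    ∑ q ∈ P, Real.log q / q ≤ 2 * Real.log N :=
  calc ∑ q ∈ P, Real.log q / q = ∑ q ∈ P, ArithmeticFunction.vonMangoldt q / q :=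
        sum_congr rfl fun q hq => by rw [ArithmeticFunction.vonMangoldt_apply_prime (hP q hq)]
    _ ≤ ∑ n ∈ Ioc 0 N, ArithmeticFunction.vonMangoldt n / n :=
        sum_le_sum_of_subset_of_nonneg (fun q hq => mem_Ioc.2 ⟨(hP q hq).pos, hN q hq⟩)
          fun n _ _ => div_nonneg ArithmeticFunction.vonMangoldt_nonneg n.cast_nonneg
    _ ≤ 2 * Real.log N := sum_vonMangoldt_div_le N

theorem sum_prod_inv_le {P : Finset ℕ} (hP : ∀ q ∈ P, q.Prime) {x : ℝ} (hx : 1 ≤ x) :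
    ∑ e ∈ P.powerset with ((∏ q ∈ e, q : ℕ) : ℝ) ≤ x, ∏ q ∈ e, (q : ℝ)⁻¹ ≤ 1 + Real.log x := by
  set E := {e ∈ P.powerset | ((∏ q ∈ e, q : ℕ) : ℝ) ≤ x}
  have hE {e} (he : e ∈ E) : e ⊆ P ∧ ((∏ q ∈ e, q : ℕ) : ℝ) ≤ x := by
    rwa [mem_filter, mem_powerset] at he
  have hinj : Set.InjOn (fun e : Finset ℕ => ∏ q ∈ e, q) E := fun e he e' he' hee' => by
    rw [← Nat.primeFactors_prod fun q hq => hP q ((hE he).1 hq),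
      ← Nat.primeFactors_prod fun q hq => hP q ((hE he').1 hq)]
    exact congrArg Nat.primeFactors hee'
  have hmaps : E.image (fun e => ∏ q ∈ e, q) ⊆ Icc 1 ⌊x⌋₊ := image_subset_iff.2 fun e he =>
    mem_Icc.2 ⟨prod_pos fun q hq => (hP q ((hE he).1 hq)).pos, Nat.le_floor (hE he).2⟩
  calc ∑ e ∈ E, ∏ q ∈ e, (q : ℝ)⁻¹ = ∑ n ∈ E.image (fun e => ∏ q ∈ e, q), (n : ℝ)⁻¹ := by
        rw [sum_image hinj]
        simp only [Nat.cast_prod, prod_inv_distrib]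
    _ ≤ ∑ n ∈ Icc 1 ⌊x⌋₊, (n : ℝ)⁻¹ :=
        sum_le_sum_of_subset_of_nonneg hmaps fun n _ _ => by positivity
    _ = (harmonic ⌊x⌋₊ : ℚ) := by
        rw [harmonic_eq_sum_Icc]
        push_cast
        rfl
    _ ≤ 1 + Real.log x := harmonic_floor_le_one_add_log x hx

theorem sum_prod_sdiff_inv_le {P : Finset ℕ} (hP : ∀ q ∈ P, q.Prime) {x : ℝ} (hx : 1 ≤ x)
    (t : Finset ℕ) :
    ∑ e ∈ P.powerset with ((∏ q ∈ e, q : ℕ) : ℝ) ≤ x ∧ t ⊆ e, ∏ q ∈ e \ t, (q : ℝ)⁻¹ ≤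
      1 + Real.log x := by
  set E := {e ∈ P.powerset | ((∏ q ∈ e, q : ℕ) : ℝ) ≤ x ∧ t ⊆ e}
  have hE {e} (he : e ∈ E) : e ⊆ P ∧ ((∏ q ∈ e, q : ℕ) : ℝ) ≤ x ∧ t ⊆ e := by
    rwa [mem_filter, mem_powerset] at he
  have hinj : Set.InjOn (· \ t) (E : Set (Finset ℕ)) := fun e he e' he' hee' => by
    rw [← sdiff_union_of_subset (hE he).2.2, ← sdiff_union_of_subset (hE he').2.2]
    exact congrArg (· ∪ t) hee'
  have hmaps : E.image (· \ t) ⊆ {e ∈ P.powerset | ((∏ q ∈ e, q : ℕ) : ℝ) ≤ x} :=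
    image_subset_iff.2 fun e he => by
      have hle : ∏ q ∈ e \ t, q ≤ ∏ q ∈ e, q := prod_le_prod_of_subset_of_one_le' sdiff_subset
        fun q hq _ => (hP q ((hE he).1 hq)).one_le
      exact mem_filter.2 ⟨mem_powerset.2 (sdiff_subset.trans (hE he).1),
        (by exact_mod_cast hle : ((∏ q ∈ e \ t, q : ℕ) : ℝ) ≤ _).trans (hE he).2.1⟩
  calc ∑ e ∈ E, ∏ q ∈ e \ t, (q : ℝ)⁻¹ = ∑ e ∈ E.image (· \ t), ∏ q ∈ e, (q : ℝ)⁻¹ := by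
        rw [sum_image hinj]
    _ ≤ ∑ e ∈ P.powerset with ((∏ q ∈ e, q : ℕ) : ℝ) ≤ x, ∏ q ∈ e, (q : ℝ)⁻¹ :=
        sum_le_sum_of_subset_of_nonneg hmaps fun e _ _ => by positivity
    _ ≤ 1 + Real.log x := sum_prod_inv_le hP hx

theorem sum_prod_one_add_div_le {P : Finset ℕ} (hP : ∀ q ∈ P, q.Prime) {x : ℝ} (hx : 1 ≤ x)
    {h : ℕ → ℝ} (hh : ∀ q ∈ P, 0 ≤ h q) :
    ∑ e ∈ P.powerset with ((∏ q ∈ e, q : ℕ) : ℝ) ≤ x, ∏ q ∈ e, ((1 + h q) / q) ≤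
      Real.exp (∑ q ∈ P, h q / q) * (1 + Real.log x) := by
  have hhdiv : ∀ q ∈ P, 0 ≤ h q / q := fun q hq => div_nonneg (hh q hq) q.cast_nonneg
  calc ∑ e ∈ P.powerset with ((∏ q ∈ e, q : ℕ) : ℝ) ≤ x, ∏ q ∈ e, ((1 + h q) / q)
      = ∑ e ∈ P.powerset with ((∏ q ∈ e, q : ℕ) : ℝ) ≤ x,
          ∑ t ∈ e.powerset, (∏ q ∈ t, h q / q) * ∏ q ∈ e \ t, (q : ℝ)⁻¹ := by
        refine sum_congr rfl fun e _ => ?_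
        rw [← prod_add]
        exact prod_congr rfl fun q _ => by ring
    _ = ∑ t ∈ P.powerset, ∑ e ∈ P.powerset with ((∏ q ∈ e, q : ℕ) : ℝ) ≤ x ∧ t ⊆ e,
          (∏ q ∈ t, h q / q) * ∏ q ∈ e \ t, (q : ℝ)⁻¹ := by
        refine sum_comm' fun e t => ?_
        simp only [mem_filter, mem_powerset]
        exact ⟨fun ⟨⟨heP, hex⟩, hte⟩ => ⟨⟨heP, hex, hte⟩, hte.trans heP⟩,
          fun ⟨⟨heP, hex, hte⟩, _⟩ => ⟨⟨heP, hex⟩, hte⟩⟩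
    _ ≤ ∑ t ∈ P.powerset, (∏ q ∈ t, h q / q) * (1 + Real.log x) := by
        refine sum_le_sum fun t ht => ?_
        rw [← mul_sum]
        exact mul_le_mul_of_nonneg_left (sum_prod_sdiff_inv_le hP hx t)
          (prod_nonneg fun q hq => hhdiv q (mem_powerset.1 ht hq))
    _ = (∏ q ∈ P, (1 + h q / q)) * (1 + Real.log x) := by rw [prod_one_add, sum_mul]
    _ ≤ Real.exp (∑ q ∈ P, h q / q) * (1 + Real.log x) := by
        have hlog : 0 ≤ 1 + Real.log x := add_nonneg zero_le_one (Real.log_nonneg hx)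
        rw [Real.exp_sum]
        gcongr with q
        · exact fun q hq => add_nonneg zero_le_one (hhdiv q hq)
        · exact add_comm 1 (h q / q) ▸ Real.add_one_le_exp _

theorem exp_sub_one_le_mul_exp (a : ℝ) : Real.exp a - 1 ≤ a * Real.exp a := by
  have h : (1 - a) * Real.exp a ≤ Real.exp (-a) * Real.exp a :=
    mul_le_mul_of_nonneg_right (Real.one_sub_le_exp_neg a) (Real.exp_pos a).le
  rw [← Real.exp_add, neg_add_cancel, Real.exp_zero] at h
  linarith

theorem sum_rpow_sub_one_div_le {P : Finset ℕ} (hP : ∀ q ∈ P, q.Prime) {α κ : ℝ} (hα : 0 ≤ α)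
    (hκ : 0 ≤ κ) (hακ : ∀ q ∈ P, α * Real.log q ≤ κ) :
    ∑ q ∈ P, ((q : ℝ) ^ α - 1) / q ≤ 2 * κ * Real.exp κ := by
  rcases P.eq_empty_or_nonempty with rfl | hne
  · rw [sum_empty]
    positivity
  calc ∑ q ∈ P, ((q : ℝ) ^ α - 1) / q ≤ ∑ q ∈ P, α * Real.exp κ * (Real.log q / q) := by
        refine sum_le_sum fun q hq => ?_
        have hq0 : (0 : ℝ) < q := by exact_mod_cast (hP q hq).pos
        calc ((q : ℝ) ^ α - 1) / q = (Real.exp (α * Real.log q) - 1) / q := by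
              rw [Real.rpow_def_of_pos hq0, mul_comm]
          _ ≤ (α * Real.log q * Real.exp κ) / q := by
              gcongr
              exact (exp_sub_one_le_mul_exp _).trans (by gcongr; exact hακ q hq)
          _ = α * Real.exp κ * (Real.log q / q) := by ring
    _ = α * Real.exp κ * ∑ q ∈ P, Real.log q / q := by rw [mul_sum]
    _ ≤ α * Real.exp κ * (2 * Real.log (P.max' hne : ℕ)) := by
        gcongr
        exact sum_log_div_le hP fun q hq => P.le_max' q hq
    _ = 2 * (α * Real.log (P.max' hne : ℕ)) * Real.exp κ := by ring
    _ ≤ 2 * κ * Real.exp κ := by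
        gcongr
        exact hακ _ (P.max'_mem hne)

theorem sum_prod_mul_rpow_sub_one_div_le {P : Finset ℕ} (hP : ∀ q ∈ P, q.Prime) {M : ℕ}
    {x y α κ : ℝ} (hx : 1 ≤ x) (hy : 1 ≤ y) (hMy : M * (y - 1) ≤ 1) (hα : 0 ≤ α) (hκ : 0 ≤ κ)
    (hακ : ∀ q ∈ P, α * Real.log q ≤ κ) :
    ∑ e ∈ P.powerset with ((∏ q ∈ e, q : ℕ) : ℝ) ≤ x,
        ∏ q ∈ e, ((y * (q : ℝ) ^ α - 1) * (M / q)) ≤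
      Real.exp (2 * M * y * κ * Real.exp κ) * (1 + Real.log x) := by
  have hpow : ∀ q ∈ P, 1 ≤ (q : ℝ) ^ α := fun q hq =>
    Real.one_le_rpow (by exact_mod_cast (hP q hq).one_le) hα
  have hfactor (q : ℕ) :
      (y * (q : ℝ) ^ α - 1) * (M / q) ≤ (1 + M * y * ((q : ℝ) ^ α - 1)) / q := by
    rw [← mul_div_assoc]
    gcongr
    linarith
  have hexponent : ∑ q ∈ P, M * y * ((q : ℝ) ^ α - 1) / q ≤ 2 * M * y * κ * Real.exp κ :=
    calc ∑ q ∈ P, M * y * ((q : ℝ) ^ α - 1) / q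
        = M * y * ∑ q ∈ P, ((q : ℝ) ^ α - 1) / q := by simp only [mul_sum, mul_div_assoc]
      _ ≤ M * y * (2 * κ * Real.exp κ) := by
          gcongr
          exact sum_rpow_sub_one_div_le hP hα hκ hακ
      _ = 2 * M * y * κ * Real.exp κ := by ring
  calc ∑ e ∈ P.powerset with ((∏ q ∈ e, q : ℕ) : ℝ) ≤ x,
        ∏ q ∈ e, ((y * (q : ℝ) ^ α - 1) * (M / q))
      ≤ ∑ e ∈ P.powerset with ((∏ q ∈ e, q : ℕ) : ℝ) ≤ x,
          ∏ q ∈ e, ((1 + M * y * ((q : ℝ) ^ α - 1)) / q) := by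
        refine sum_le_sum fun e he => prod_le_prod (fun q hq => ?_) fun q _ => hfactor q
        have hqP := mem_powerset.1 (mem_filter.1 he).1 hq
        exact mul_nonneg (sub_nonneg.2 (one_le_mul_of_one_le_of_one_le hy (hpow q hqP)))
          (by positivity)
    _ ≤ Real.exp (∑ q ∈ P, M * y * ((q : ℝ) ^ α - 1) / q) * (1 + Real.log x) :=
        sum_prod_one_add_div_le hP hx fun q hq =>
          mul_nonneg (by positivity) (sub_nonneg.2 (hpow q hq))
    _ ≤ Real.exp (2 * M * y * κ * Real.exp κ) * (1 + Real.log x) := by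
        have hlog : 0 ≤ Real.log x := Real.log_nonneg hx
        gcongr

/-! ### Moments of the number of prime conditions -/

theorem sum_prod_one_add_le {D : ∀ p : ℕ, Finset (ZMod p)} {P : Finset ℕ}
    (hP : ∀ q ∈ P, q.Prime) {M : ℕ} (hD : ∀ q ∈ P, #(D q) ≤ M) {g : ℕ → ℝ}
    (hg : ∀ q ∈ P, 0 ≤ g q) {x : ℝ} {V : Finset ℤ} (hV : ∀ v ∈ V, |(v : ℝ)| ≤ x)
    {T : ℤ → Finset ℕ} (hTP : ∀ v ∈ V, T v ⊆ P)
    (hTD : ∀ v ∈ V, ∀ q ∈ T v, (v : ZMod q) ∈ D q)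
    (hTx : ∀ v ∈ V, ((∏ q ∈ T v, q : ℕ) : ℝ) ≤ x) :
    ∑ v ∈ V, ∏ q ∈ T v, (1 + g q) ≤
      3 * x * ∑ e ∈ P.powerset with ((∏ q ∈ e, q : ℕ) : ℝ) ≤ x, ∏ q ∈ e, g q * (M / q) := by
  set E := {e ∈ P.powerset | ((∏ q ∈ e, q : ℕ) : ℝ) ≤ x}
  have hE {e} (he : e ∈ E) : e ⊆ P ∧ ((∏ q ∈ e, q : ℕ) : ℝ) ≤ x := by
    rwa [mem_filter, mem_powerset] at he
  have hprod {e} (he : e ∈ E) : 0 ≤ ∏ q ∈ e, g q := prod_nonneg fun q hq => hg q ((hE he).1 hq)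
  have hsub {v} (hv : v ∈ V) : (T v).powerset ⊆ {e ∈ E | ∀ q ∈ e, (v : ZMod q) ∈ D q} := by
    intro e he
    have heT := mem_powerset.1 he
    have hle : ∏ q ∈ e, q ≤ ∏ q ∈ T v, q := prod_le_prod_of_subset_of_one_le' heT
      fun q hq _ => (hP q (hTP v hv hq)).one_le
    exact mem_filter.2 ⟨mem_filter.2 ⟨mem_powerset.2 (heT.trans (hTP v hv)),
      (by exact_mod_cast hle : ((∏ q ∈ e, q : ℕ) : ℝ) ≤ _).trans (hTx v hv)⟩,
      fun q hq => hTD v hv q (heT hq)⟩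
  have hcount {e} (he : e ∈ E) :
      (#{v ∈ V | ∀ q ∈ e, (v : ZMod q) ∈ D q} : ℝ) ≤ 3 * x * ∏ q ∈ e, (M / q : ℝ) :=
    card_filter_forall_intCast_mem_le_prod_div (fun q hq => (hP q ((hE he).1 hq)).pos)
      (fun p hp q hq => (Nat.coprime_primes (hP p ((hE he).1 hp)) (hP q ((hE he).1 hq))).2)
      (fun q hq => hD q ((hE he).1 hq)) (hE he).2 hV
  calc ∑ v ∈ V, ∏ q ∈ T v, (1 + g q) = ∑ v ∈ V, ∑ e ∈ (T v).powerset, ∏ q ∈ e, g q := by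
        simp only [prod_one_add]
    _ ≤ ∑ v ∈ V, ∑ e ∈ E with ∀ q ∈ e, (v : ZMod q) ∈ D q, ∏ q ∈ e, g q :=
        sum_le_sum fun v hv => sum_le_sum_of_subset_of_nonneg (hsub hv) fun e he _ =>
          hprod (mem_filter.1 he).1
    _ = ∑ e ∈ E, (∏ q ∈ e, g q) * #{v ∈ V | ∀ q ∈ e, (v : ZMod q) ∈ D q} := by
        rw [sum_comm' (s' := fun e => {v ∈ V | ∀ q ∈ e, (v : ZMod q) ∈ D q}) (t' := E)
          fun v e => by simp only [mem_filter]; tauto]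
        simp only [sum_const, nsmul_eq_mul, mul_comm]
    _ ≤ ∑ e ∈ E, (∏ q ∈ e, g q) * (3 * x * ∏ q ∈ e, (M / q : ℝ)) :=
        sum_le_sum fun e he => mul_le_mul_of_nonneg_left (hcount he) (hprod he)
    _ = 3 * x * ∑ e ∈ E, ∏ q ∈ e, g q * (M / q) := by
        rw [mul_sum]
        refine sum_congr rfl fun e _ => ?_
        rw [prod_mul_distrib]
        ring

theorem sum_prod_mul_rpow_le {D : ∀ p : ℕ, Finset (ZMod p)} {P : Finset ℕ}
    (hP : ∀ q ∈ P, q.Prime) {M : ℕ} (hD : ∀ q ∈ P, #(D q) ≤ M) {x y α κ : ℝ} (hx : 1 ≤ x)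
    (hy : 1 ≤ y) (hMy : M * (y - 1) ≤ 1) (hα : 0 ≤ α) (hκ : 0 ≤ κ)
    (hακ : ∀ q ∈ P, α * Real.log q ≤ κ) {V : Finset ℤ} (hV : ∀ v ∈ V, |(v : ℝ)| ≤ x)
    {T : ℤ → Finset ℕ} (hTP : ∀ v ∈ V, T v ⊆ P)
    (hTD : ∀ v ∈ V, ∀ q ∈ T v, (v : ZMod q) ∈ D q)
    (hTx : ∀ v ∈ V, ((∏ q ∈ T v, q : ℕ) : ℝ) ≤ x) :
    ∑ v ∈ V, ∏ q ∈ T v, y * (q : ℝ) ^ α ≤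
      3 * x * (Real.exp (2 * M * y * κ * Real.exp κ) * (1 + Real.log x)) := by
  have hweight : ∀ q ∈ P, 0 ≤ y * (q : ℝ) ^ α - 1 := fun q hq =>
    sub_nonneg.2 (one_le_mul_of_one_le_of_one_le hy
      (Real.one_le_rpow (by exact_mod_cast (hP q hq).one_le) hα))
  calc ∑ v ∈ V, ∏ q ∈ T v, y * (q : ℝ) ^ α
      = ∑ v ∈ V, ∏ q ∈ T v, (1 + (y * (q : ℝ) ^ α - 1)) := by simp only [add_sub_cancel]
    _ ≤ _ := sum_prod_one_add_le hP hD hweight hV hTP hTD hTx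
    _ ≤ _ := by
      gcongr
      exact sum_prod_mul_rpow_sub_one_div_le hP hx hy hMy hα hκ hακ

theorem exists_prod_filter_lt_le_lt_mul {S : Finset ℕ} {u : ℝ} (hu : 1 ≤ u)
    (hS : u < ∏ q ∈ S, (q : ℝ)) :
    ∃ p ∈ S, ∏ q ∈ S with q < p, (q : ℝ) ≤ u ∧ u < p * ∏ q ∈ S with q < p, (q : ℝ) := by
  have hall : {q ∈ S | q < S.sup id + 1} = S :=
    filter_true_of_mem fun q hq => Nat.lt_add_one_of_le (le_sup (f := id) hq)
  obtain ⟨p, hp, hp'⟩ := Nat.exists_not_and_succ_of_not_zero_of_exists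
    (p := fun n => u < ∏ q ∈ S with q < n, (q : ℝ)) (by simpa using hu) ⟨_, hall.symm ▸ hS⟩
  rw [not_lt] at hp
  by_cases hpS : p ∈ S
  · have hinsert : {q ∈ S | q < p + 1} = insert p {q ∈ S | q < p} := by
      ext q
      simp only [mem_filter, mem_insert]
      grind
    rw [hinsert, prod_insert (by simp)] at hp'
    exact ⟨p, hpS, hp, hp'⟩
  · have hsame : {q ∈ S | q < p + 1} = {q ∈ S | q < p} := filter_congr fun q hq => by
      have : q ≠ p := fun h => hpS (h ▸ hq)
      omega
    exact absurd (hsame ▸ hp') hp.not_gt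

theorem exists_subset_prod_le_card_le {S : Finset ℕ} (hS : ∀ q ∈ S, 1 < q) {u : ℝ}
    (hu : 1 ≤ u) {A : ℕ} (hSA : ∏ q ∈ S, (q : ℝ) ≤ u ^ A) :
    ∃ (s : ℕ) (T : Finset ℕ), T ⊆ S ∧ ∏ q ∈ T, (q : ℝ) ≤ u ∧ #S ≤ #T + A * (s + 1) ∧
      (∀ q ∈ T, (q : ℝ) ^ s ≤ u) ∧ u ^ s ≤ u * (∏ q ∈ T, (q : ℝ)) ^ s := by
  rcases le_or_gt (∏ q ∈ S, (q : ℝ)) u with hSu | hSu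
  · exact ⟨0, S, Subset.rfl, hSu, Nat.le_add_right _ _, fun _ _ => by simpa using hu,
      by simpa using hu⟩
  obtain ⟨p, hpS, hle, hlt⟩ := exists_prod_filter_lt_le_lt_mul hu hSu
  set T := {q ∈ S | q < p}
  have hTS : T ⊆ S := filter_subset _ _
  have hp1 : (1 : ℝ) < p := by exact_mod_cast hS p hpS
  obtain ⟨s, hsu, hus⟩ := exists_nat_pow_near hu hp1
  refine ⟨s, T, hTS, hle, ?_, fun q hq => ?_, ?_⟩
  · have hmissed : (p : ℝ) ^ #(S \ T) ≤ (p : ℝ) ^ (A * (s + 1)) :=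
      calc (p : ℝ) ^ #(S \ T) = ∏ _q ∈ S \ T, (p : ℝ) := (prod_const _).symm
        _ ≤ ∏ q ∈ S \ T, (q : ℝ) := prod_le_prod (fun _ _ => by positivity) fun q hq => by
            obtain ⟨hqS, hqT⟩ := mem_sdiff.1 hq
            exact_mod_cast not_lt.1 fun hqp => hqT (mem_filter.2 ⟨hqS, hqp⟩)
        _ ≤ ∏ q ∈ S, (q : ℝ) := prod_le_prod_of_subset_of_one_le sdiff_subset
            (fun _ _ => by positivity) fun q hq _ => by exact_mod_cast (hS q hq).le
        _ ≤ u ^ A := hSA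
        _ ≤ ((p : ℝ) ^ (s + 1)) ^ A := by gcongr
        _ = (p : ℝ) ^ (A * (s + 1)) := by rw [← pow_mul, mul_comm]
    rw [← card_sdiff_add_card_eq_card hTS, add_comm]
    exact Nat.add_le_add_left ((pow_le_pow_iff_right₀ hp1).1 hmissed) _
  · calc (q : ℝ) ^ s ≤ (p : ℝ) ^ s := by
          gcongr
          exact_mod_cast (mem_filter.1 hq).2.le
      _ ≤ u := hsu
  · calc u ^ s ≤ (p * ∏ q ∈ T, (q : ℝ)) ^ s := by gcongr
      _ = (p : ℝ) ^ s * (∏ q ∈ T, (q : ℝ)) ^ s := mul_pow _ _ _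
      _ ≤ u * (∏ q ∈ T, (q : ℝ)) ^ s := by gcongr

theorem exp_mul_sub_one_le_prod_rpow {T : Finset ℕ} (hT : ∀ q ∈ T, 0 < q) {s : ℕ} {c x : ℝ}
    (hc : 0 ≤ c) (hx : 1 < x) (hTx : x ^ s ≤ x * (∏ q ∈ T, (q : ℝ)) ^ s) :
    Real.exp (c * (s - 1)) ≤ ∏ q ∈ T, (q : ℝ) ^ (c * s / Real.log x) := by
  have hQ : 0 < ∏ q ∈ T, (q : ℝ) := prod_pos fun q hq => by exact_mod_cast hT q hq
  have hlog : 0 < Real.log x := Real.log_pos hx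
  have hx0 : 0 < x := one_pos.trans hx
  have hlogle : s * Real.log x ≤ Real.log x + s * Real.log (∏ q ∈ T, (q : ℝ)) := by
    simpa only [Real.log_pow, Real.log_mul hx0.ne' (pow_pos hQ s).ne'] using
      Real.log_le_log (by positivity) hTx
  rw [Real.finsetProd_rpow T _ fun q _ => q.cast_nonneg, Real.rpow_def_of_pos hQ]
  rw [Real.exp_le_exp, mul_div_assoc', le_div_iff₀ hlog]
  calc c * (s - 1) * Real.log x = c * (s * Real.log x - Real.log x) := by ring
    _ ≤ c * (s * Real.log (∏ q ∈ T, (q : ℝ))) := by gcongr; linarith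
    _ = Real.log (∏ q ∈ T, (q : ℝ)) * (c * s) := by ring

theorem sum_one_half_pow_le_two (s : Finset ℕ) : ∑ i ∈ s, (1 / 2 : ℝ) ^ i ≤ 2 :=
  (summable_geometric_two.sum_le_tsum s fun _ _ => by positivity).trans_eq tsum_geometric_two

theorem pow_card_le_mul_prod_rpow {c x y : ℝ} {A s : ℕ} (hy : 1 ≤ y) (hc : 2 * y ^ A ≤ Real.exp c)
    (hx : 1 < x) {S T : Finset ℕ} (hT : ∀ q ∈ T, 0 < q) (hST : #S ≤ #T + A * (s + 1))
    (hTx : x ^ s ≤ x * (∏ q ∈ T, (q : ℝ)) ^ s) :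
    y ^ #S ≤ y ^ A * Real.exp c * (1 / 2) ^ s * ∏ q ∈ T, y * (q : ℝ) ^ (c * s / Real.log x) := by
  have hc0 : 0 ≤ c := Real.one_le_exp_iff.1 (by linarith [one_le_pow₀ hy (n := A)])
  have hexp : y ^ (A * s) ≤ (1 / 2) ^ s * (Real.exp c * Real.exp (c * (s - 1))) :=
    calc y ^ (A * s) = (1 / 2) ^ s * (2 * y ^ A) ^ s := by
          rw [← mul_pow, ← mul_assoc, one_div, inv_mul_cancel₀ two_ne_zero, one_mul, pow_mul]
      _ ≤ (1 / 2) ^ s * Real.exp c ^ s := by gcongr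
      _ = (1 / 2) ^ s * (Real.exp c * Real.exp (c * (s - 1))) := by
          rw [← Real.exp_nat_mul, ← Real.exp_add]
          ring_nf
  calc y ^ #S ≤ y ^ (#T + A * (s + 1)) := pow_le_pow_right₀ hy hST
    _ = y ^ A * y ^ (A * s) * y ^ #T := by ring
    _ ≤ y ^ A * ((1 / 2) ^ s * (Real.exp c * ∏ q ∈ T, (q : ℝ) ^ (c * s / Real.log x))) *
          y ^ #T := by
        gcongr
        refine hexp.trans ?_
        gcongr
        exact exp_mul_sub_one_le_prod_rpow hT hc0 hx hTx
    _ = y ^ A * Real.exp c * (1 / 2) ^ s * ∏ q ∈ T, y * (q : ℝ) ^ (c * s / Real.log x) := by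
        rw [prod_mul_distrib, prod_const]
        ring

theorem sum_pow_card_le_half_pow_mul {M A i : ℕ} {c x y : ℝ} (hy : 1 ≤ y)
    (hMy : M * (y - 1) ≤ 1) (hc : 2 * y ^ A ≤ Real.exp c) (hx : Real.exp 1 ≤ x)
    {D : ∀ p : ℕ, Finset (ZMod p)} {V : Finset ℤ} {S T : ℤ → Finset ℕ} (hV : ∀ v ∈ V, |(v : ℝ)| ≤ x)
    (hT : ∀ v ∈ V, ∀ q ∈ T v, q.Prime ∧ (v : ZMod q) ∈ D q ∧ #(D q) ≤ M ∧ (q : ℝ) ^ i ≤ x)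
    (hTx : ∀ v ∈ V, ∏ q ∈ T v, (q : ℝ) ≤ x) (hST : ∀ v ∈ V, #(S v) ≤ #(T v) + A * (i + 1))
    (hTi : ∀ v ∈ V, x ^ i ≤ x * (∏ q ∈ T v, (q : ℝ)) ^ i) :
    ∑ v ∈ V, y ^ #(S v) ≤ (1 / 2) ^ i *
      (6 * y ^ A * Real.exp c * Real.exp (2 * M * y * c * Real.exp c) * (x * Real.log x)) := by
  have hc0 : 0 ≤ c := Real.one_le_exp_iff.1 (by linarith [one_le_pow₀ hy (n := A)])
  have hx1 : 1 < x := (Real.one_lt_exp_iff.2 one_pos).trans_le hx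
  have hlog : 1 ≤ Real.log x := (Real.le_log_iff_exp_le (by linarith)).2 hx
  have hP {q} (hq : q ∈ V.biUnion T) : q.Prime ∧ #(D q) ≤ M ∧ (q : ℝ) ^ i ≤ x := by
    obtain ⟨v, hv, hqv⟩ := mem_biUnion.1 hq
    exact ⟨(hT v hv q hqv).1, (hT v hv q hqv).2.2⟩
  have hακ : ∀ q ∈ V.biUnion T, c * i / Real.log x * Real.log q ≤ c := fun q hq => by
    have hlogq : i * Real.log q ≤ Real.log x := Real.log_pow q i ▸
      Real.log_le_log (pow_pos (by exact_mod_cast (hP hq).1.pos) i) (hP hq).2.2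
    rw [div_mul_eq_mul_div, div_le_iff₀ (by positivity), mul_assoc]
    gcongr
  calc ∑ v ∈ V, y ^ #(S v)
      ≤ ∑ v ∈ V, y ^ A * Real.exp c * (1 / 2) ^ i *
          ∏ q ∈ T v, y * (q : ℝ) ^ (c * i / Real.log x) := sum_le_sum fun v hv =>
        pow_card_le_mul_prod_rpow hy hc hx1 (fun q hq => (hT v hv q hq).1.pos) (hST v hv) (hTi v hv)
    _ ≤ y ^ A * Real.exp c * (1 / 2) ^ i *
          (3 * x * (Real.exp (2 * M * y * c * Real.exp c) * (1 + Real.log x))) := by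
        rw [← mul_sum]
        gcongr
        exact sum_prod_mul_rpow_le (fun q hq => (hP hq).1) (fun q hq => (hP hq).2.1) hx1.le hy hMy
          (by positivity) hc0 hακ hV (fun v hv => subset_biUnion_of_mem T hv)
          (fun v hv q hq => (hT v hv q hq).2.1) fun v hv => Nat.cast_prod (R := ℝ) _ _ ▸ hTx v hv
    _ ≤ y ^ A * Real.exp c * (1 / 2) ^ i *
          (3 * x * (Real.exp (2 * M * y * c * Real.exp c) * (2 * Real.log x))) := by
        gcongr
        linarith
    _ = (1 / 2) ^ i *
          (6 * y ^ A * Real.exp c * Real.exp (2 * M * y * c * Real.exp c) * (x * Real.log x)) := by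
        ring

theorem exists_sum_pow_card_le (M A : ℕ) {y : ℝ} (hy : 1 ≤ y) (hMy : M * (y - 1) ≤ 1) :
    ∃ C > 0, ∀ x ≥ Real.exp 1, ∀ (D : ∀ p : ℕ, Finset (ZMod p)) (V : Finset ℤ)
      (S : ℤ → Finset ℕ), (∀ v ∈ V, |(v : ℝ)| ≤ x) → (∀ v ∈ V, ∏ q ∈ S v, (q : ℝ) ≤ x ^ A) →
      (∀ v ∈ V, ∀ q ∈ S v, q.Prime ∧ (v : ZMod q) ∈ D q ∧ #(D q) ≤ M) →
      ∑ v ∈ V, y ^ #(S v) ≤ C * (x * Real.log x) := by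
  set c := Real.log (2 * y ^ A)
  have hc : 2 * y ^ A ≤ Real.exp c := (Real.exp_log (by positivity)).ge
  set K := 6 * y ^ A * Real.exp c * Real.exp (2 * M * y * c * Real.exp c)
  refine ⟨2 * K, by positivity, fun x hx D V S hV hSx hS => ?_⟩
  have hx1 : 1 ≤ x := (Real.one_le_exp zero_le_one).trans hx
  have hlog : 0 ≤ Real.log x := Real.log_nonneg hx1
  choose! s T hTS hTx hST hTs hTs' using fun v hv =>
    exists_subset_prod_le_card_le (fun q hq => (hS v hv q hq).1.one_lt) hx1 (hSx v hv)
  have hscale (i : ℕ) :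
      ∑ v ∈ V with s v = i, y ^ #(S v) ≤ (1 / 2) ^ i * (K * (x * Real.log x)) := by
    have hVi {v} (hv : v ∈ {v ∈ V | s v = i}) : v ∈ V ∧ s v = i := mem_filter.1 hv
    refine sum_pow_card_le_half_pow_mul (D := D) hy hMy hc hx (fun v hv => hV v (hVi hv).1)
      (fun v hv q hq => ?_) (fun v hv => hTx v (hVi hv).1) (fun v hv => ?_) fun v hv => ?_
    all_goals obtain ⟨hvV, rfl⟩ := hVi hv
    · obtain ⟨hqp, hqD, hqM⟩ := hS v hvV q (hTS v hvV hq)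
      exact ⟨hqp, hqD, hqM, hTs v hvV q hq⟩
    · exact hST v hvV
    · exact hTs' v hvV
  calc ∑ v ∈ V, y ^ #(S v) = ∑ i ∈ V.image s, ∑ v ∈ V with s v = i, y ^ #(S v) :=
        (sum_fiberwise_of_maps_to (fun v hv => mem_image_of_mem s hv) _).symm
    _ ≤ ∑ i ∈ V.image s, (1 / 2) ^ i * (K * (x * Real.log x)) := sum_le_sum fun i _ => hscale i
    _ ≤ 2 * (K * (x * Real.log x)) := by
        rw [← sum_mul]
        gcongr
        exact sum_one_half_pow_le_two _
    _ = 2 * K * (x * Real.log x) := by ring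

/-! ### The resultant of a polynomial and its translates -/

section ShiftResultant

variable {R S : Type*} [CommRing R] [CommRing S]

/-- The polynomial `v ↦ Res(g(X), g(X + v))`. The two degrees in the resultant are fixed to be
`g.natDegree`, so that the resultant commutes with ring homomorphisms that lower the degree. -/
def shiftResultant (g : R[X]) : R[X] :=
  resultant (g.map C) (taylor X (g.map C)) g.natDegree g.natDegree

theorem map_eval_shiftResultant (φ : R →+* S) (g : R[X]) (v : R) :
    φ ((shiftResultant g).eval v) =
      resultant (g.map φ) (taylor (φ v) (g.map φ)) g.natDegree g.natDegree := by
  have hC : (φ.comp (evalRingHom v)).comp C = φ := by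
    ext r
    simp
  have hX : (φ.comp (evalRingHom v)) X = φ v := by simp
  calc φ ((shiftResultant g).eval v) = (φ.comp (evalRingHom v)) (shiftResultant g) := rfl
    _ = _ := by rw [shiftResultant, ← resultant_map_map, map_taylor, Polynomial.map_map,
        hC, hX]

theorem map_eval_shiftResultant_eq_zero {φ : R →+* S} {g : R[X]} (hg : g.natDegree ≠ 0) {a : S}
    {v : R} (ha : (g.map φ).IsRoot a) (hav : (g.map φ).IsRoot (a + φ v)) :
    φ ((shiftResultant g).eval v) = 0 := by
  obtain ⟨P, Q, -, -, hPQ⟩ := exists_mul_add_mul_eq_C_resultant (g.map φ)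
    (taylor (φ v) (g.map φ)) natDegree_map_le ((natDegree_taylor _ _).trans_le natDegree_map_le)
    (Or.inl hg)
  have heval := congrArg (eval a) hPQ
  rw [eval_add, eval_mul, eval_mul, taylor_eval, ha, hav, zero_mul, zero_mul, add_zero, eval_C]
    at heval
  rw [map_eval_shiftResultant, heval]

theorem eval_shiftResultant_ne_zero [IsDomain S] {φ : R →+* S} (hφ : Function.Injective φ)
    {g : R[X]} {v : R} (hcop : IsCoprime (g.map φ) (taylor (φ v) (g.map φ))) :
    (shiftResultant g).eval v ≠ 0 := by
  have hres := resultant_ne_zero _ _ hcop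
  rw [natDegree_taylor, natDegree_map_eq_of_injective hφ, ← map_eval_shiftResultant] at hres
  exact fun h => hres (h ▸ map_zero φ)

end ShiftResultant

theorem natDegree_eq_zero_of_taylor_eq_self {R : Type*} [CommRing R] [IsDomain R] [CharZero R]
    {f : R[X]} {v : R} (hv : v ≠ 0) (hf : taylor v f = f) : f.natDegree = 0 := by
  have hper (n : ℕ) : f.eval (n * v) = f.eval 0 := by
    induction n with
    | zero => simp
    | succ n ih =>
      calc f.eval ((n + 1 : ℕ) * v) = f.eval (n * v + v) := by rw [Nat.cast_succ, add_one_mul]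
        _ = (taylor v f).eval (n * v) := (taylor_eval v f _).symm
        _ = f.eval 0 := by rw [hf, ih]
  have hconst : f = C (f.eval 0) := by
    refine eq_of_infinite_eval_eq _ _ (Set.Infinite.mono (s := Set.range fun n : ℕ => (n : R) * v)
      ?_ (Set.infinite_range_of_injective ?_))
    · rintro _ ⟨n, rfl⟩
      exact (hper n).trans eval_C.symm
    · exact (mul_left_injective₀ hv).comp Nat.cast_injective
  rw [hconst, natDegree_C]

theorem isCoprime_taylor_of_irreducible {K : Type*} [Field K] [CharZero K] {f : K[X]}
    (hf : Irreducible f) {v : K} (hv : v ≠ 0) : IsCoprime f (taylor v f) := by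
  refine hf.coprime_iff_not_dvd.2 fun hdvd => hf.natDegree_pos.ne' ?_
  refine natDegree_eq_zero_of_taylor_eq_self hv (sub_eq_zero.1 ?_)
  refine eq_zero_of_dvd_of_degree_lt (dvd_sub_self_right.2 hdvd) ?_
  have hlt := degree_sub_lt_left (degree_taylor f v)
    ((taylor_injective v).ne_iff' (map_zero _) |>.2 hf.ne_zero) (leadingCoeff_taylor v f)
  rwa [degree_taylor] at hlt

theorem exists_abs_eval_le_pow (P : ℝ[X]) :
    ∃ A : ℕ, ∀ x ≥ 2, ∀ t, |t| ≤ x → |P.eval t| ≤ x ^ A := by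
  induction P using Polynomial.induction_on' with
  | add P Q hP hQ =>
    obtain ⟨A, hA⟩ := hP
    obtain ⟨B, hB⟩ := hQ
    refine ⟨max A B + 1, fun x hx t ht => ?_⟩
    have hx1 : 1 ≤ x := by linarith
    calc |(P + Q).eval t| ≤ |P.eval t| + |Q.eval t| := eval_add (R := ℝ) ▸ abs_add_le _ _
      _ ≤ x ^ max A B + x ^ max A B := add_le_add
          ((hA x hx t ht).trans (pow_le_pow_right₀ hx1 (le_max_left A B)))
          ((hB x hx t ht).trans (pow_le_pow_right₀ hx1 (le_max_right A B)))
      _ = 2 * x ^ max A B := (two_mul _).symm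
      _ ≤ x * x ^ max A B := by gcongr
      _ = x ^ (max A B + 1) := (pow_succ' x _).symm
  | monomial n a =>
    obtain ⟨k, hk⟩ := pow_unbounded_of_one_lt |a| one_lt_two
    refine ⟨k + n, fun x hx t ht => ?_⟩
    calc |(monomial n a).eval t| = |a| * |t| ^ n := by rw [eval_monomial, abs_mul, abs_pow]
      _ ≤ x ^ k * x ^ n := by
          gcongr
          exact hk.le.trans (by gcongr)
      _ = x ^ (k + n) := (pow_add x k n).symm

theorem exists_natAbs_eval_le_pow (R : ℤ[X]) :
    ∃ A : ℕ, ∀ x : ℝ, 2 ≤ x → ∀ v : ℤ, |(v : ℝ)| ≤ x → ((R.eval v).natAbs : ℝ) ≤ x ^ A := by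
  obtain ⟨A, hA⟩ := exists_abs_eval_le_pow (R.map (Int.castRingHom ℝ))
  refine ⟨A, fun x hx v hv => ?_⟩
  simpa only [eval_intCast_map, eq_intCast, Nat.cast_natAbs, Int.cast_abs, Int.cast_id]
    using hA x hx v hv

theorem card_primeFactors_le {n A : ℕ} {x : ℝ} (hn : n ≠ 0) (hnx : n ≤ x ^ A) :
    (#n.primeFactors : ℝ) ≤ 2 * A * Real.log x := by
  have hpow : (2 : ℝ) ^ #n.primeFactors ≤ x ^ A := by
    refine le_trans ?_ hnx
    exact_mod_cast
      (pow_card_le_prod _ _ 2 fun p hp => (Nat.prime_of_mem_primeFactors hp).two_le).trans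
      (Nat.le_of_dvd (Nat.pos_of_ne_zero hn) (Nat.prod_primeFactors_dvd n))
  have hlog := Real.log_le_log (by positivity) hpow
  rw [Real.log_pow, Real.log_pow] at hlog
  have hcard : (0 : ℝ) ≤ #n.primeFactors := Nat.cast_nonneg _
  nlinarith [Real.log_two_gt_d9, hcard]

/-! ### Polynomials detecting differences of residue classes -/

/-- The values `R(v)`, `v ≠ 0`, of the polynomial `R` are nonzero and divisible by all the primes
counted by `N(v)`: this bounds those primes by the size of `v`. -/
structure DetectsDifferences (I : ∀ p : ℕ, Finset (ZMod p)) (R : ℤ[X]) : Prop where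
  eval_ne_zero {v : ℤ} : v ≠ 0 → R.eval v ≠ 0
  dvd_eval {p : ℕ} {v : ℤ} : p.Prime → (v : ZMod p) ∈ I p - I p → (p : ℤ) ∣ R.eval v

namespace DetectsDifferences

variable {I : ∀ p : ℕ, Finset (ZMod p)} {R : ℤ[X]}

theorem mem_primeFactors (hR : DetectsDifferences I R) {p : ℕ} (hp : p.Prime) {v : ℤ} (hv : v ≠ 0)
    (hpv : (v : ZMod p) ∈ I p - I p) : p ∈ (R.eval v).natAbs.primeFactors :=
  Nat.mem_primeFactors.2 ⟨hp, Int.natCast_dvd.1 (hR.dvd_eval hp hpv),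
    Int.natAbs_ne_zero.2 (hR.eval_ne_zero hv)⟩

theorem exists_sum_pow_ncard_Nset_le (hR : DetectsDifferences I R) {B : Finset ℕ} {d : ℕ}
    (hI : ∀ p : ℕ, p.Prime → p ∉ B → #(I p) ≤ d) {y : ℝ} (hy : 1 ≤ y)
    (hdy : (d : ℝ) ^ 2 * (y - 1) ≤ 1) :
    ∃ C > 0, ∀ x ≥ Real.exp 1, ∀ V : Finset ℤ, (∀ v ∈ V, v ≠ 0 ∧ |(v : ℝ)| ≤ x) →
      ∑ v ∈ V, y ^ (Nset I v).ncard ≤ C * (x * Real.log x) := by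
  obtain ⟨A, hA⟩ := exists_natAbs_eval_le_pow R
  obtain ⟨C, hC, hmoment⟩ := exists_sum_pow_card_le (d ^ 2) A hy (by exact_mod_cast hdy)
  refine ⟨y ^ #B * C, by positivity, fun x hx V hV => ?_⟩
  have hx2 : 2 ≤ x := by linarith [Real.add_one_le_exp 1]
  let S (v : ℤ) : Finset ℕ := {p ∈ (R.eval v).natAbs.primeFactors | p ∈ Nset I v ∧ p ∉ B}
  have hSx : ∀ v ∈ V, ∏ p ∈ S v, (p : ℝ) ≤ x ^ A := fun v hv => by
    have hle : ∏ p ∈ S v, p ≤ (R.eval v).natAbs :=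
      Nat.le_of_dvd (Int.natAbs_pos.2 (hR.eval_ne_zero (hV v hv).1))
        ((prod_dvd_prod_of_subset _ _ _ (filter_subset _ _)).trans (Nat.prod_primeFactors_dvd _))
    rw [← Nat.cast_prod]
    exact (Nat.cast_le.2 hle).trans (hA x hx2 v (hV v hv).2)
  have hS : ∀ v ∈ V, ∀ p ∈ S v, p.Prime ∧ (v : ZMod p) ∈ I p - I p ∧ #(I p - I p) ≤ d ^ 2 := by
    intro v _ p hp
    obtain ⟨-, ⟨hpp, hpv⟩, hpB⟩ := mem_filter.1 hp
    refine ⟨hpp, hpv, card_sub_le.trans ?_⟩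
    rw [sq]
    exact Nat.mul_le_mul (hI p hpp hpB) (hI p hpp hpB)
  have hcard : ∀ v ∈ V, (Nset I v).ncard ≤ #B + #(S v) := fun v hv => by
    have hsub : Nset I v ⊆ (B ∪ S v : Finset ℕ) := fun p hp => by
      rw [coe_union, Set.mem_union, mem_coe, or_iff_not_imp_left]
      exact fun hpB => mem_filter.2 ⟨hR.mem_primeFactors hp.1 (hV v hv).1 hp.2, hp, hpB⟩
    exact (Set.ncard_le_ncard hsub).trans ((Set.ncard_coe_finset _).trans_le (card_union_le _ _))
  calc ∑ v ∈ V, y ^ (Nset I v).ncard ≤ ∑ v ∈ V, y ^ #B * y ^ #(S v) :=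
        sum_le_sum fun v hv => (pow_le_pow_right₀ hy (hcard v hv)).trans_eq (pow_add _ _ _)
    _ ≤ y ^ #B * (C * (x * Real.log x)) := by
        rw [← mul_sum]
        gcongr
        exact hmoment x hx (fun p => I p - I p) V S (fun v hv => (hV v hv).2) hSx hS
    _ = y ^ #B * C * (x * Real.log x) := by ring

theorem gSet_subset_biUnion (hR : DetectsDifferences I R) {mq : ℕ → ℤ}
    (hmq : ∀ q : ℕ, q.Prime → (I q).Nonempty → (mq q : ZMod q) ∈ I q - I q) (u : ℝ) (w : ℤ)
    (k : ℕ) :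
    gSet I mq u w k ⊆
      ({m ∈ Icc (-⌊u⌋) ⌊u⌋ | m ≠ 0 ∧ m + w ≠ 0 ∧ k ≤ (Nset I (m + w)).ncard}.biUnion
        fun m => (R.eval m).natAbs.primeFactors : Finset ℕ) := by
  rintro q ⟨hq, hIq, hm0, hmu, hmw, hk⟩
  have hm0 : mq q ≠ 0 := abs_pos.1 hm0
  exact mem_biUnion.2 ⟨mq q, mem_filter.2 ⟨mem_Icc.2 (abs_le.1 (Int.le_floor.2 hmu)), hm0, hmw, hk⟩,
    hR.mem_primeFactors hq hm0 (hmq q hq hIq)⟩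

theorem exists_card_mul_pow_le (hR : DetectsDifferences I R) {B : Finset ℕ} {d : ℕ}
    (hI : ∀ p : ℕ, p.Prime → p ∉ B → #(I p) ≤ d) {y : ℝ} (hy : 1 ≤ y)
    (hdy : (d : ℝ) ^ 2 * (y - 1) ≤ 1) :
    ∃ C > 0, ∀ u : ℝ, 2 ≤ u → ∀ w : ℤ, |(w : ℝ)| ≤ u → ∀ (k : ℕ) (W : Finset ℤ),
      (∀ m ∈ W, |(m : ℝ)| ≤ u ∧ m + w ≠ 0 ∧ k ≤ (Nset I (m + w)).ncard) →
      #W * y ^ k ≤ C * (u * Real.log u) := by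
  obtain ⟨C, hC, hmoment⟩ := hR.exists_sum_pow_ncard_Nset_le hI hy hdy
  refine ⟨4 * C, by positivity, fun u hu w hw k W hW => ?_⟩
  have hlog : Real.log (2 * u) ≤ 2 * Real.log u := by
    rw [Real.log_mul two_ne_zero (by linarith)]
    linarith [Real.log_le_log two_pos hu]
  calc #W * y ^ k ≤ ∑ m ∈ W, y ^ (Nset I (m + w)).ncard := by
        rw [← nsmul_eq_mul]
        exact card_nsmul_le_sum _ _ _ fun m hm => pow_le_pow_right₀ hy (hW m hm).2.2
    _ = ∑ v ∈ W.image (· + w), y ^ (Nset I v).ncard := by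
        rw [sum_image (add_left_injective w).injOn]
    _ ≤ C * (2 * u * Real.log (2 * u)) := by
        refine hmoment _ (by linarith [Real.exp_one_lt_d9]) _ (forall_mem_image.2 fun m hm => ?_)
        refine ⟨(hW m hm).2.1, ?_⟩
        push_cast
        linarith [abs_add_le (m : ℝ) w, (hW m hm).1]
    _ ≤ C * (2 * u * (2 * Real.log u)) := by gcongr
    _ = 4 * C * (u * Real.log u) := by ring

theorem exists_ncard_gSet_mul_pow_le (hR : DetectsDifferences I R) {B : Finset ℕ} {d : ℕ}
    (hI : ∀ p : ℕ, p.Prime → p ∉ B → #(I p) ≤ d) {y : ℝ} (hy : 1 ≤ y)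
    (hdy : (d : ℝ) ^ 2 * (y - 1) ≤ 1) :
    ∃ C > 0, ∀ u : ℝ, 2 ≤ u → ∀ mq : ℕ → ℤ,
      (∀ q : ℕ, q.Prime → (I q).Nonempty → (mq q : ZMod q) ∈ I q - I q) →
      ∀ w : ℤ, |(w : ℝ)| ≤ u → ∀ k : ℕ, (gSet I mq u w k).Finite ∧
        (gSet I mq u w k).ncard * y ^ k ≤ C * (u * Real.log u ^ 2) := by
  obtain ⟨A, hA⟩ := exists_natAbs_eval_le_pow R
  obtain ⟨C, hC, hmarkov⟩ := hR.exists_card_mul_pow_le hI hy hdy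
  refine ⟨2 * A * C + 1, by positivity, fun u hu mq hmq w hw k => ?_⟩
  have hlog : 0 ≤ Real.log u := Real.log_nonneg (by linarith)
  set W := {m ∈ Icc (-⌊u⌋) ⌊u⌋ | m ≠ 0 ∧ m + w ≠ 0 ∧ k ≤ (Nset I (m + w)).ncard}
  have hW {m} (hm : m ∈ W) :
      |(m : ℝ)| ≤ u ∧ m ≠ 0 ∧ m + w ≠ 0 ∧ k ≤ (Nset I (m + w)).ncard := by
    obtain ⟨hmu, hm⟩ := mem_filter.1 hm
    exact ⟨by exact_mod_cast Int.le_floor.1 (abs_le.2 (mem_Icc.1 hmu)), hm⟩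
  have hsub := hR.gSet_subset_biUnion hmq u w k
  have hcard : ((gSet I mq u w k).ncard : ℝ) ≤ #W * (2 * A * Real.log u) :=
    calc ((gSet I mq u w k).ncard : ℝ)
        ≤ ∑ m ∈ W, (#(R.eval m).natAbs.primeFactors : ℝ) := by
          exact_mod_cast (Set.ncard_le_ncard hsub).trans
            ((Set.ncard_coe_finset _).trans_le card_biUnion_le)
      _ ≤ ∑ _m ∈ W, 2 * A * Real.log u := sum_le_sum fun m hm => card_primeFactors_le
          (Int.natAbs_ne_zero.2 (hR.eval_ne_zero (hW hm).2.1)) (hA u hu m (hW hm).1)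
      _ = #W * (2 * A * Real.log u) := by rw [sum_const, nsmul_eq_mul]
  refine ⟨(finite_toSet _).subset hsub, ?_⟩
  calc (gSet I mq u w k).ncard * y ^ k ≤ #W * (2 * A * Real.log u) * y ^ k := by gcongr
    _ = 2 * A * Real.log u * (#W * y ^ k) := by ring
    _ ≤ 2 * A * Real.log u * (C * (u * Real.log u)) := by
        refine mul_le_mul_of_nonneg_left (hmarkov u hu w hw k W fun m hm => ?_) (by positivity)
        exact ⟨(hW hm).1, (hW hm).2.2⟩
    _ = 2 * A * C * (u * Real.log u ^ 2) := by ring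
    _ ≤ (2 * A * C + 1) * (u * Real.log u ^ 2) := by
        gcongr
        linarith

end DetectsDifferences

/-! ### The sieving system of a polynomial -/

theorem mul_two_rpow_inv_sub_one_le_one (n : ℕ) : n * ((2 : ℝ) ^ (n : ℝ)⁻¹ - 1) ≤ 1 := by
  rcases n.eq_zero_or_pos with rfl | hn
  · simp
  have hbernoulli := one_add_mul_sub_le_pow
    (by linarith [Real.rpow_pos_of_pos two_pos (n : ℝ)⁻¹] : -1 ≤ (2 : ℝ) ^ (n : ℝ)⁻¹) n
  rw [Real.rpow_inv_natCast_pow zero_le_two hn.ne'] at hbernoulli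
  linarith

theorem exists_int_polynomial_map_eq (f : ℚ[X]) :
    ∃ b : ℤ, b ≠ 0 ∧ ∃ g : ℤ[X], g.map (Int.castRingHom ℚ) = C (b : ℚ) * f := by
  obtain ⟨b, hb, hg⟩ := IsLocalization.integerNormalization_spec (nonZeroDivisors ℤ) f
  refine ⟨b, nonZeroDivisors.ne_zero hb, _, hg.trans ?_⟩
  rw [← smul_eq_C_mul, Int.cast_smul_eq_zsmul]

theorem detectsDifferences_shiftResultant {I : ∀ p : ℕ, Finset (ZMod p)} {g : ℤ[X]}
    (hg : g.natDegree ≠ 0)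
    (hcop : ∀ v : ℤ, v ≠ 0 → IsCoprime (g.map (Int.castRingHom ℚ))
      (taylor (v : ℚ) (g.map (Int.castRingHom ℚ))))
    (hI : ∀ p : ℕ, p.Prime → ∀ r ∈ I p, (g.map (Int.castRingHom (ZMod p))).IsRoot r) :
    DetectsDifferences I (shiftResultant g) where
  eval_ne_zero hv := eval_shiftResultant_ne_zero (φ := Int.castRingHom ℚ) Int.cast_injective
    (hcop _ hv)
  dvd_eval {p v} hp hv := by
    obtain ⟨r, hr, a, ha, hra⟩ := mem_sub.1 hv
    rw [← ZMod.intCast_zmod_eq_zero_iff_dvd]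
    refine map_eval_shiftResultant_eq_zero (φ := Int.castRingHom (ZMod p)) hg (hI p hp a ha) ?_
    rw [eq_intCast, ← hra, add_sub_cancel]
    exact hI p hp r hr

theorem card_le_natDegree_of_forall_isRoot_map {g : ℤ[X]} (hg : g ≠ 0) {p : ℕ} (hp : p.Prime)
    (hpg : p ∉ g.leadingCoeff.natAbs.primeFactors) {s : Finset (ZMod p)}
    (hs : ∀ r ∈ s, (g.map (Int.castRingHom (ZMod p))).IsRoot r) : #s ≤ g.natDegree := by
  have := Fact.mk hp
  have hlead : Int.castRingHom (ZMod p) g.leadingCoeff ≠ 0 := fun h => hpg <|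
    Nat.mem_primeFactors.2 ⟨hp, Int.natCast_dvd.1 ((ZMod.intCast_zmod_eq_zero_iff_dvd _ p).1 h),
      Int.natAbs_ne_zero.2 (leadingCoeff_ne_zero.2 hg)⟩
  have hmap : g.map (Int.castRingHom (ZMod p)) ≠ 0 := fun h => hlead <| by
    rw [leadingCoeff, ← coeff_map, h, coeff_zero]
  exact (card_le_degree_of_subset_roots fun r hr => (mem_roots hmap).2 (hs r hr)).trans
    natDegree_map_le

theorem two_rpow_neg_div_mul_pow (k d : ℕ) :
    (2 : ℝ) ^ (-(k : ℝ) / (d : ℝ) ^ 2) * ((2 : ℝ) ^ ((d ^ 2 : ℕ) : ℝ)⁻¹) ^ k = 1 := by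
  rw [← Real.rpow_mul_natCast zero_le_two, ← Real.rpow_add two_pos]
  push_cast
  rw [neg_div, div_eq_inv_mul, neg_add_cancel, Real.rpow_zero]

theorem exists_eval_eq_intCast_of_mem {f : ℚ[X]} {d : ℕ}
    (hint : ∀ n : ℤ, ∃ m : ℤ, f.eval (n : ℚ) = m)
    {I : ∀ p : ℕ, Finset (ZMod p)}
    (hI : ∀ p : ℕ, p.Prime →
      (p ≤ d → I p = ∅) ∧
      (d < p → ∀ nres : ZMod p, nres ∈ I p ↔
        ∃ m : ℤ, ((m : ZMod p) = nres ∧ ∀ v : ℤ, (v : ℚ) = f.eval (m : ℚ) → (p : ℤ) ∣ v)))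
    {p : ℕ} (hp : p.Prime) {r : ZMod p} (hr : r ∈ I p) :
      ∃ m n : ℤ, (m : ZMod p) = r ∧ f.eval (m : ℚ) = n ∧ (p : ℤ) ∣ n := by
  rcases le_or_gt p d with hpd | hpd
  · rw [(hI p hp).1 hpd] at hr
    exact absurd hr (notMem_empty r)
  · obtain ⟨m, hm, hdvd⟩ := ((hI p hp).2 hpd r).1 hr
    obtain ⟨n, hn⟩ := hint m
    exact ⟨m, n, hm, hn, hdvd n hn.symm⟩

theorem isCoprime_taylor_C_mul {K : Type*} [Field K] {b v : K} (hb : b ≠ 0) {f : K[X]}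
    (hf : IsCoprime f (taylor v f)) : IsCoprime (C b * f) (taylor v (C b * f)) := by
  rw [taylor_mul, taylor_C]
  exact (isCoprime_mul_unit_left (isUnit_C.2 hb.isUnit) _ _).2 hf

theorem isRoot_map_of_map_eq_C_mul {f : ℚ[X]} {b : ℤ} {g : ℤ[X]}
    (hg : g.map (Int.castRingHom ℚ) = C (b : ℚ) * f) {p : ℕ} {m n : ℤ} (hmn : f.eval (m : ℚ) = n)
    (hpn : (p : ℤ) ∣ n) : (g.map (Int.castRingHom (ZMod p))).IsRoot (m : ZMod p) := by
  have hcast := congrArg (eval (m : ℚ)) hg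
  rw [eval_intCast_map, eval_mul, eval_C, hmn, eq_intCast] at hcast
  have heval : g.eval m = b * n := by exact_mod_cast hcast
  rw [IsRoot, eval_intCast_map, eq_intCast, Int.cast_id, heval,
    ZMod.intCast_zmod_eq_zero_iff_dvd]
  exact hpn.mul_left b

theorem exists_detectsDifferences {f : ℚ[X]} (hf : f.natDegree ≠ 0)
    (hcop : ∀ v : ℤ, v ≠ 0 → IsCoprime f (taylor (v : ℚ) f)) {I : ∀ p : ℕ, Finset (ZMod p)}
    (hI : ∀ p : ℕ, p.Prime → ∀ r ∈ I p,
      ∃ m n : ℤ, (m : ZMod p) = r ∧ f.eval (m : ℚ) = n ∧ (p : ℤ) ∣ n) :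
    ∃ (R : ℤ[X]) (B : Finset ℕ), DetectsDifferences I R ∧
      ∀ p : ℕ, p.Prime → p ∉ B → #(I p) ≤ f.natDegree := by
  obtain ⟨b, hb, g, hg⟩ := exists_int_polynomial_map_eq f
  have hbQ : (b : ℚ) ≠ 0 := Int.cast_ne_zero.2 hb
  have hdeg : g.natDegree = f.natDegree := by
    rw [← natDegree_map_eq_of_injective (f := Int.castRingHom ℚ) Int.cast_injective g, hg,
      natDegree_C_mul hbQ]
  have hroot : ∀ p : ℕ, p.Prime → ∀ r ∈ I p, (g.map (Int.castRingHom (ZMod p))).IsRoot r := by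
    rintro p hp r hr
    obtain ⟨m, n, rfl, hmn, hpn⟩ := hI p hp r hr
    exact isRoot_map_of_map_eq_C_mul hg hmn hpn
  refine ⟨shiftResultant g, g.leadingCoeff.natAbs.primeFactors,
    detectsDifferences_shiftResultant (hdeg ▸ hf)
      (fun v hv => hg ▸ isCoprime_taylor_C_mul hbQ (hcop v hv)) hroot, fun p hp hpB => ?_⟩
  rw [← hdeg]
  exact card_le_natDegree_of_forall_isRoot_map (ne_zero_of_natDegree_gt (n := 0) (by omega)) hp hpB
    (hroot p hp)

theorem stmt15_general (f : ℚ[X]) (d : ℕ) (hdeg : f.natDegree = d) (hd1 : 1 ≤ d)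
    (hcop : ∀ v : ℤ, v ≠ 0 → IsCoprime f (taylor (v : ℚ) f))
    (I : ∀ p : ℕ, Finset (ZMod p))
    (hI : ∀ p : ℕ, p.Prime → ∀ r ∈ I p,
      ∃ m n : ℤ, (m : ZMod p) = r ∧ f.eval (m : ℚ) = n ∧ (p : ℤ) ∣ n) :
    ∃ Cf : ℝ, 0 < Cf ∧
      ∀ u : ℝ, 2 ≤ u → ∀ mq : ℕ → ℤ,
        (∀ q : ℕ, q.Prime → (I q).Nonempty → (mq q : ZMod q) ∈ I q - I q) →
        ∀ w : ℤ, |(w : ℝ)| ≤ u → ∀ k : ℕ,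
          (gSet I mq u w k).Finite ∧
          ((gSet I mq u w k).ncard : ℝ)
            ≤ Cf * (2 : ℝ) ^ (-(k : ℝ) / (d : ℝ) ^ 2) * u * Real.log u ^ 2 := by
  obtain ⟨R, B, hR, hB⟩ := exists_detectsDifferences (by omega) hcop hI
  rw [hdeg] at hB
  let y : ℝ := 2 ^ ((d ^ 2 : ℕ) : ℝ)⁻¹
  have hy : 1 ≤ y := Real.one_le_rpow one_le_two (by positivity)
  have hdy : (d : ℝ) ^ 2 * (y - 1) ≤ 1 := by
    exact_mod_cast mul_two_rpow_inv_sub_one_le_one (d ^ 2)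
  obtain ⟨K, hK, hcount⟩ := hR.exists_ncard_gSet_mul_pow_le hB hy hdy
  refine ⟨K, hK, fun u hu mq hmq w hw k => ?_⟩
  obtain ⟨hfin, hle⟩ := hcount u hu mq hmq w hw k
  refine ⟨hfin, ?_⟩
  calc ((gSet I mq u w k).ncard : ℝ)
      = (2 : ℝ) ^ (-(k : ℝ) / (d : ℝ) ^ 2) * ((gSet I mq u w k).ncard * y ^ k) := by
        rw [mul_left_comm, two_rpow_neg_div_mul_pow, mul_one]
    _ ≤ (2 : ℝ) ^ (-(k : ℝ) / (d : ℝ) ^ 2) * (K * (u * Real.log u ^ 2)) := by gcongr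
    _ = K * (2 : ℝ) ^ (-(k : ℝ) / (d : ℝ) ^ 2) * u * Real.log u ^ 2 := by ring

end

/-- **Hypothesis (g) for polynomial sieving systems**, with `c₁ = 2` and
`c₂ = (log 2)/d²`:  there is `C_f` such that for every `u ≥ 10`, every choice of
nonzero integers `m_q` with `m_q mod q ∈ I_q - I_q` (for primes `q` with `|I_q| ≥ 1`),
every `|w| ≤ u` and every `k ≥ 1`, the number of primes `q` with `|I_q| ≥ 1`,
`0 < |m_q| ≤ u`, `m_q + w ≠ 0` and `N(m_q + w) ≥ k` is at most
`C_f · 2^{-k/d²} · u · (log u)²`. -/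
theorem stmt15 (f : Polynomial ℚ) (d : ℕ) (hdeg : f.natDegree = d) (hd1 : 1 ≤ d)
    (hint : ∀ n : ℤ, ∃ m : ℤ, f.eval (n : ℚ) = (m : ℚ))
    (hlead : 0 < f.leadingCoeff)
    (hirr : Irreducible f)
    -- the polynomial sieving system of `f`
    (I : ∀ p : ℕ, Finset (ZMod p))
    (hI : ∀ p : ℕ, p.Prime →
      (p ≤ d → I p = ∅) ∧
      (d < p → ∀ nres : ZMod p, nres ∈ I p ↔
        ∃ m : ℤ, ((m : ZMod p) = nres ∧ ∀ v : ℤ, (v : ℚ) = f.eval (m : ℚ) → (p : ℤ) ∣ v)))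
    :
    ∃ Cf : ℝ, 0 < Cf ∧
      ∀ u : ℝ, 10 ≤ u → ∀ mq : ℕ → ℤ,
        (∀ q : ℕ, q.Prime → (I q).Nonempty → mq q ≠ 0 ∧ (mq q : ZMod q) ∈ (I q - I q)) →
        ∀ w : ℤ, ((|w| : ℤ) : ℝ) ≤ u → ∀ k : ℕ, 1 ≤ k →
          (gSet I mq u w k).Finite ∧
          ((gSet I mq u w k).ncard : ℝ)
            ≤ Cf * (2 : ℝ) ^ (-(k : ℝ) / (d : ℝ) ^ 2) * u * Real.log u ^ 2 := by
  obtain ⟨Cf, hCf, hbound⟩ := stmt15_general f d hdeg hd1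
    (fun v hv => isCoprime_taylor_of_irreducible hirr (Int.cast_ne_zero.2 hv)) I
    fun p hp r hr => exists_eval_eq_intCast_of_mem hint hI hp hr
  refine ⟨Cf, hCf, fun u hu mq hmq w hw k _ => hbound u (by linarith) mq ?_ w ?_ k⟩
  · exact fun q hq hIq => (hmq q hq hIq).2
  · exact_mod_cast hw

end
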